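/- There is a unique x_⋆ in the interval [1/6, 1/4] satisfying 2(1−3x_⋆)·log 2 − H_2(2x_⋆) = 0, and for every integer t ≥ 2 the t-wide diamond C(1,t,1) satisfies c_⋆(C(1,t,1)) = (1−2x_⋆)·log 2 (≈ 0.389429). -/

import Mathlib

open Classical in
/-- The finset of all antichains (including the empty antichain) of a finite poset `P`. -/
noncomputable def antichains (P : Type*) [Fintype P] [PartialOrder P] : Finset (Finset P) :=
  Finset.univ.filter (fun A => IsAntichain (· ≤ ·) (A : Set P))

/-- The upper shadow `∂_Q S` of an antichain `S` of `P` inside a subset `Q ⊆ P`. -/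
def upperShadow {P : Type*} [PartialOrder P] (Q : Set P) (S : Set P) : Set P :=
  {y | y ∈ Q ∧ (∃ x ∈ S, x ≤ y) ∧ ∀ z ∈ Q, z < y → ∀ x ∈ S, ¬ x ≤ z}

open Classical in
/-- The antichains of the subposet `Q ⊆ P`, i.e. antichains of `P` contained in `Q`. -/
noncomputable def antichainsIn {P : Type*} [Fintype P] [PartialOrder P] (Q : Set P) :
    Finset (Finset P) :=
  (antichains P).filter (fun A => (A : Set P) ⊆ Q)

/-- A weighting `α ∈ Δ_{a(P)}`: a nonnegative function on the antichains of `P`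
(extended by `0` off the antichains) summing to `1`. -/
def IsWeighting {P : Type*} [Fintype P] [PartialOrder P] (α : Finset P → ℝ) : Prop :=
  (∀ A ∈ antichains P, 0 ≤ α A) ∧ (∀ A ∉ antichains P, α A = 0) ∧
    ∑ A ∈ antichains P, α A = 1

open Classical in
/-- The shadow weighting `∂_Q(α)`: the coordinate of `∂_Q(α)` at an antichain `T` of `Q`
is the sum of `α` over all antichains of `P` whose upper shadow in `Q` is `T`. -/
noncomputable def shadowWeight {P : Type*} [Fintype P] [PartialOrder P]
    (α : Finset P → ℝ) (Q : Set P) (T : Finset P) : ℝ :=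
  ∑ A ∈ (antichains P).filter (fun B : Finset P => upperShadow Q (B : Set P) = (T : Set P)), α A

/-- The critical exponent `c_{α,P}(Q) = H_{a(Q)}(∂_Q(α)) / |Q|` of a subposet `Q` of `P`
with respect to a weighting `α` (natural logarithm; `0 log 0 = 0`). -/
noncomputable def critExp {P : Type*} [Fintype P] [PartialOrder P]
    (α : Finset P → ℝ) (Q : Set P) : ℝ :=
  (∑ T ∈ antichainsIn Q, -(shadowWeight α Q T * Real.log (shadowWeight α Q T))) /
    (Q.ncard : ℝ)

/-- The critical exponent `c_⋆(P) = max_{α ∈ Δ_{a(P)}} min_{∅ ≠ Q ⊆ P} c_{α,P}(Q)`,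
expressed as `sup {c ≥ 0 : ∃ α ∈ Δ_{a(P)}, ∀ ∅ ≠ Q ⊆ P, c ≤ c_{α,P}(Q)}`. -/
noncomputable def critStar (P : Type*) [Fintype P] [PartialOrder P] : ℝ :=
  sSup {c : ℝ | 0 ≤ c ∧ ∃ α : Finset P → ℝ, IsWeighting α ∧
    ∀ Q : Set P, Q.Nonempty → c ≤ critExp α Q}

/-- The binary entropy function `H₂(x) = -x log x - (1-x) log (1-x)` (natural log). -/
noncomputable def H₂ (x : ℝ) : ℝ := -(x * Real.log x) - (1 - x) * Real.log (1 - x)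

/-- The layered poset `C(s 0, …, s (ℓ-1))`: disjoint antichains `V 0, …, V (ℓ-1)` with
`|V i| = s i`, where `x < y` precisely when `x` lies in an earlier layer than `y`. -/
def Layered (ℓ : ℕ) (s : Fin ℓ → ℕ) : Type := (i : Fin ℓ) × Fin (s i)

instance (ℓ : ℕ) (s : Fin ℓ → ℕ) : PartialOrder (Layered ℓ s) where
  le x y := x.1 < y.1 ∨ x = y
  le_refl x := Or.inr rfl
  le_trans x y z hxy hyz := by
    rcases hxy with h | h
    · rcases hyz with h' | h'
      · exact Or.inl (h.trans h')
      · subst h'; exact Or.inl h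
    · subst h; exact hyz
  le_antisymm x y hxy hyx := by
    rcases hxy with h | h
    · rcases hyx with h' | h'
      · exact absurd (h.trans h') (lt_irrefl _)
      · exact h'.symm
    · exact h

instance (ℓ : ℕ) (s : Fin ℓ → ℕ) : Fintype (Layered ℓ s) :=
  inferInstanceAs (Fintype ((i : Fin ℓ) × Fin (s i)))

/-! The antichains of a diamond are `∅`, `{⊥}` and one further antichain for each set of middle
elements (with `{⊤}` for the empty set). If a weighting puts `p` on `∅` and `q` on `{⊥}`, its
smallest critical exponent is bounded by the two subposets `{⊥, ⊤}` and `P`: the first bound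
favours a large `p + q`, the second a small one, since it contains the entropy
`(1 - p - q) t log 2` of the middle layer, and by Gibbs' inequality they balance at `p = q = x⋆`.
Conversely, take `p = q = x⋆` and spread the rest evenly. If `⊥` and `⊤` lie in `Q`, then
`H(∂_Q α) = |Q| (1 - 2x⋆) log 2` exactly. Removing `⊥` or `⊤` from `Q` merges a block of weight
`x⋆` with another of weight at most `1 - 2x⋆`, and by concavity of `-y log y` this loses at most
`(1 - 2x⋆) log 2` of entropy. -/

open Finset Real

section Entropy

theorem add_le_add_of_concaveOn {s : Set ℝ} {f : ℝ → ℝ} (hf : ConcaveOn ℝ s f) {a b d : ℝ}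
    (ha : a ∈ s) (hbd : b + d ∈ s) (hab : a ≤ b) (hd : 0 ≤ d) :
    f a + f (b + d) ≤ f (a + d) + f b := by
  rcases (add_nonneg (sub_nonneg.2 hab) hd).eq_or_lt with hlen | hlen
  · have hd0 : d = 0 := by linarith
    have hba : b = a := by linarith
    simp [hd0, hba]
  set l := d / (b - a + d) with hl
  have hl0 : 0 ≤ l := by positivity
  have hl1 : 0 ≤ 1 - l := by
    rw [hl, sub_nonneg, div_le_one hlen]; linarith
  have hmul : l * (b - a + d) = d := div_mul_cancel₀ d hlen.ne'
  have h₁ : (1 - l) * f a + l * f (b + d) ≤ f (a + d) := by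
    have h := hf.2 ha hbd hl1 hl0 (by ring)
    simp only [smul_eq_mul] at h
    rwa [show (1 - l) * a + l * (b + d) = a + d by linear_combination hmul] at h
  have h₂ : l * f a + (1 - l) * f (b + d) ≤ f b := by
    have h := hf.2 ha hbd hl0 hl1 (by ring)
    simp only [smul_eq_mul] at h
    rwa [show l * a + (1 - l) * (b + d) = b by linear_combination -hmul] at h
  linarith

theorem negMulLog_le_neg_mul_log_sub_add {y z : ℝ} (hy : 0 ≤ y) (hz : 0 < z) :
    negMulLog y ≤ -y * log z - y + z := by
  have h : z * negMulLog (y / z) ≤ z * (1 - y / z) :=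
    mul_le_mul_of_nonneg_left (negMulLog_le_one_sub_self (div_nonneg hy hz.le)) hz.le
  calc negMulLog y = negMulLog (z * (y / z)) := by rw [mul_div_cancel₀ y hz.ne']
    _ = y / z * negMulLog z + z * negMulLog (y / z) := negMulLog_mul z (y / z)
    _ ≤ y / z * negMulLog z + z * (1 - y / z) := by gcongr
    _ = -y * log z - y + z := by rw [negMulLog]; field_simp; ring

theorem sum_negMulLog_le_add_mul_log_card {ι : Type*} {s : Finset ι} {f : ι → ℝ}
    (hf : ∀ i ∈ s, 0 ≤ f i) :
    ∑ i ∈ s, negMulLog (f i) ≤ negMulLog (∑ i ∈ s, f i) + (∑ i ∈ s, f i) * log #s := by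
  rcases s.eq_empty_or_nonempty with rfl | hs
  · simp
  have hcard : (0 : ℝ) < #s := by exact_mod_cast hs.card_pos
  have hjensen := concaveOn_negMulLog.le_map_sum (t := s) (w := fun _ => (#s : ℝ)⁻¹) (p := f)
    (fun _ _ => by positivity) (by simp [hcard.ne']) hf
  simp only [smul_eq_mul, ← mul_sum, negMulLog_mul] at hjensen
  have hinv : negMulLog (#s : ℝ)⁻¹ = (#s : ℝ)⁻¹ * log #s := by
    rw [negMulLog, log_inv]; ring
  rw [hinv] at hjensen
  have h := mul_le_mul_of_nonneg_left hjensen hcard.le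
  field_simp at h
  linarith

theorem negMulLog_add_sub_le {x c w : ℝ} (hx : 0 ≤ x)
    (hbal : 2 * negMulLog x + negMulLog (1 - 2 * x) = 2 * c) (hw : 0 ≤ w) (hwx : w ≤ 1 - 2 * x) :
    negMulLog w + (negMulLog x - c) ≤ negMulLog (w + x) := by
  -- By concavity, `negMulLog` grows least over a step of length `x` when the step starts at the
  -- rightmost `w`, namely `1 - 2x`, and even less over the next step, from `1 - x` to `1`.
  have hmono := add_le_add_of_concaveOn concaveOn_negMulLog (d := x) (a := w) (b := 1 - 2 * x) hw
    (show 0 ≤ 1 - 2 * x + x by linarith) hwx hx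
  have hmid := add_le_add_of_concaveOn concaveOn_negMulLog (d := x) (a := 1 - 2 * x) (b := 1 - x)
    (show 0 ≤ 1 - 2 * x by linarith) (show (0 : ℝ) ≤ 1 - x + x by linarith) (by linarith) hx
  rw [show 1 - 2 * x + x = 1 - x by ring] at hmono hmid
  rw [sub_add_cancel, negMulLog_one] at hmid
  linarith

theorem le_of_entropy_bounds {x t p q c : ℝ} (ht : 2 ≤ t) (hx : 1 / 6 ≤ x) (hx' : x ≤ 1 / 3)
    (hbal : 2 * negMulLog x + negMulLog (1 - 2 * x) = 2 * ((1 - 2 * x) * log 2))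
    (hp : 0 ≤ p) (hq : 0 ≤ q) (hpq : p + q ≤ 1)
    (hpair : 2 * c ≤ negMulLog p + negMulLog q + negMulLog (1 - p - q))
    (hall : (t + 2) * c ≤
      negMulLog p + negMulLog q + negMulLog (1 - p - q) + (1 - p - q) * (t * log 2)) :
    c ≤ (1 - 2 * x) * log 2 := by
  have hx0 : 0 < x := by linarith
  have hr0 : 0 < 1 - 2 * x := by linarith
  -- Gibbs' inequality against `(x, x, 1 - 2x)` makes both bounds on `c` affine in `p + q`; they
  -- agree at `p + q = 2x`, where they equal the claimed bound, and have slopes of opposite sign.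
  have hgibbs : negMulLog p + negMulLog q + negMulLog (1 - p - q) ≤
      -(p + q) * log x - (1 - (p + q)) * log (1 - 2 * x) := by
    linarith [negMulLog_le_neg_mul_log_sub_add hp hx0, negMulLog_le_neg_mul_log_sub_add hq hx0,
      negMulLog_le_neg_mul_log_sub_add (show 0 ≤ 1 - p - q by linarith) hr0]
  have hlog2 : 0 < log 2 := log_pos one_lt_two
  have hslope : 0 ≤ log (1 - 2 * x) - log x := sub_nonneg.2 (log_le_log hx0 (by linarith))
  have hslope' : log (1 - 2 * x) - log x ≤ t * log 2 := by
    have hlog4 : log (1 - 2 * x) ≤ log (2 ^ 2 * x) := log_le_log hr0 (by linarith)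
    rw [log_mul (by norm_num) hx0.ne', log_pow, Nat.cast_ofNat] at hlog4
    linarith [mul_le_mul_of_nonneg_right ht hlog2.le]
  simp only [negMulLog] at hbal
  rcases le_total (p + q) (2 * x) with hs | hs
  · linarith [mul_nonneg (sub_nonneg.2 hs) hslope]
  · refine le_of_mul_le_mul_left (a := t + 2) ?_ (by linarith)
    linarith [mul_nonneg (sub_nonneg.2 hs) (sub_nonneg.2 hslope')]

end Entropy

section Root

theorem H₂_eq_binEntropy (x : ℝ) : H₂ x = binEntropy x := by
  rw [binEntropy_eq_negMulLog_add_negMulLog_one_sub, H₂, negMulLog, negMulLog]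
  ring

theorem strictAntiOn_sub_H₂_two_mul :
    StrictAntiOn (fun x : ℝ => 2 * (1 - 3 * x) * log 2 - H₂ (2 * x)) (Set.Icc 0 (1 / 4)) := by
  intro a ha b hb hab
  have hlog2 : 0 < log 2 := log_pos one_lt_two
  have hentropy : binEntropy (2 * a) < binEntropy (2 * b) :=
    binEntropy_strictMonoOn ⟨by linarith [ha.1], by linarith [ha.2]⟩
      ⟨by linarith [hb.1], by linarith [hb.2]⟩ (by linarith)
  simp only [H₂_eq_binEntropy]
  linarith [mul_lt_mul_of_pos_right hab hlog2]

theorem exists_sub_H₂_two_mul_eq_zero : ∃ x ∈ Set.Icc (1 / 6 : ℝ) (1 / 4),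
    2 * (1 - 3 * x) * log 2 - H₂ (2 * x) = 0 := by
  have hcont : Continuous fun x : ℝ => 2 * (1 - 3 * x) * log 2 - H₂ (2 * x) := by
    simp only [H₂_eq_binEntropy]
    fun_prop
  have hlog2 : 0 < log 2 := log_pos one_lt_two
  have hright : 2 * (1 - 3 * (1 / 4)) * log 2 - H₂ (2 * (1 / 4)) ≤ 0 := by
    rw [H₂_eq_binEntropy, show 2 * (1 / 4 : ℝ) = 2⁻¹ by norm_num, binEntropy_two_inv]
    linarith
  have hleft : 0 ≤ 2 * (1 - 3 * (1 / 6)) * log 2 - H₂ (2 * (1 / 6)) := by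
    have h27 : log (3 ^ 3) ≤ log (2 ^ 5) := log_le_log (by norm_num) (by norm_num)
    rw [log_pow, log_pow] at h27
    push_cast at h27
    rw [H₂, show 1 - 2 * (1 / 6) = (2 / 3 : ℝ) by norm_num,
      show 2 * (1 / 6) = (3⁻¹ : ℝ) by norm_num, log_inv, log_div two_ne_zero three_ne_zero]
    linarith
  exact intermediate_value_Icc' (by norm_num) hcont.continuousOn ⟨hright, hleft⟩

theorem two_mul_negMulLog_add_eq_of_sub_H₂_eq_zero {x : ℝ} (hx : x ≠ 0)
    (h : 2 * (1 - 3 * x) * log 2 - H₂ (2 * x) = 0) :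
    2 * negMulLog x + negMulLog (1 - 2 * x) = 2 * ((1 - 2 * x) * log 2) := by
  rw [H₂, log_mul two_ne_zero hx] at h
  rw [negMulLog, negMulLog]
  linarith

end Root

section Poset

variable {P : Type*} [PartialOrder P]

theorem upperShadow_empty (Q : Set P) : upperShadow Q ∅ = ∅ := by
  simp [upperShadow]

theorem upperShadow_eq_setOf_minimal (Q S : Set P) :
    upperShadow Q S = {y | Minimal (· ∈ Q ∩ (upperClosure S : Set P)) y} := by
  ext y
  simp only [upperShadow, Set.mem_ofPred_eq, minimal_iff_forall_lt, Set.mem_inter_iff,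
    SetLike.mem_coe, mem_upperClosure, not_and, not_exists, and_assoc]
  exact and_congr_right' <| and_congr_right' <| forall_congr' fun _ => forall_comm

variable [Fintype P]

theorem mem_antichains {A : Finset P} : A ∈ antichains P ↔ IsAntichain (· ≤ ·) (A : Set P) := by
  simp [antichains]

theorem mem_antichainsIn {Q T : Finset P} :
    T ∈ antichainsIn (Q : Set P) ↔ IsAntichain (· ≤ ·) (T : Set P) ∧ T ⊆ Q := by
  simp [antichainsIn, mem_antichains]

theorem antichainsIn_univ : antichainsIn ((univ : Finset P) : Set P) = antichains P := by
  simp [antichainsIn]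

theorem IsWeighting.shadowWeight_nonneg {α : Finset P → ℝ} (hα : IsWeighting α) (Q : Set P)
    (T : Finset P) : 0 ≤ shadowWeight α Q T := by
  classical
  exact sum_nonneg fun A hA => hα.1 A (mem_filter.1 hA).1

/-- The entropy `H(∂_Q(α))` of the shadow weighting, the numerator of `critExp α Q`. -/
noncomputable def shadowEntropy (α : Finset P → ℝ) (Q : Set P) : ℝ :=
  ∑ T ∈ antichainsIn Q, negMulLog (shadowWeight α Q T)

theorem le_critExp_iff {α : Finset P → ℝ} {Q : Finset P} (hQ : Q.Nonempty) {c : ℝ} :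
    c ≤ critExp α Q ↔ #Q * c ≤ shadowEntropy α Q := by
  have hcard : (0 : ℝ) < #Q := by exact_mod_cast hQ.card_pos
  simp only [critExp, shadowEntropy, negMulLog, neg_mul, Set.ncard_coe_finset]
  rw [le_div_iff₀' hcard]

end Poset

section Diamond

variable {P : Type*}

/-- For a diamond `P` and a set `N` of middle elements of `Q`, the antichain of minimal elements of
`(N ∪ {⊤}) ∩ Q`. For `Q = P` these are the antichains of `P` other than `∅` and `{⊥}`, encoded by
`N`, so that `{⊤}` corresponds to `N = ∅`. -/
def traceAntichain [Top P] [DecidableEq P] (Q N : Finset P) : Finset P :=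
  if N = ∅ ∧ ⊤ ∈ Q then {⊤} else N

theorem mem_traceAntichain [Top P] [DecidableEq P] {Q N : Finset P} {p : P} :
    p ∈ traceAntichain Q N ↔ p ∈ N ∨ p = ⊤ ∧ N = ∅ ∧ ⊤ ∈ Q := by
  unfold traceAntichain
  split_ifs with h <;> simp [h]

theorem traceAntichain_eq_empty_iff [Top P] [DecidableEq P] {Q N : Finset P} :
    traceAntichain Q N = ∅ ↔ N = ∅ ∧ ⊤ ∉ Q := by
  unfold traceAntichain
  split_ifs with h
  · simp [h]
  · tauto

variable [Fintype P] [PartialOrder P] [BoundedOrder P] [DecidableEq P]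

/-- The elements of a bounded poset other than its two extremes; in `C(1,t,1)`, the layer `V_2`. -/
def middle (P : Type*) [Fintype P] [PartialOrder P] [BoundedOrder P] [DecidableEq P] : Finset P :=
  {⊥, ⊤}ᶜ

/-- A bounded poset is a diamond if its middle elements are pairwise incomparable; with at least
two elements it is then the wide diamond `C(1,t,1)` with `t = |P| - 2`. -/
def IsDiamond (P : Type*) [Fintype P] [PartialOrder P] [BoundedOrder P] [DecidableEq P] : Prop :=
  IsAntichain (· ≤ ·) (middle P : Set P)

theorem mem_middle {p : P} : p ∈ middle P ↔ p ≠ ⊥ ∧ p ≠ ⊤ := by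
  simp [middle]

theorem bot_notMem_of_subset_middle {N : Finset P} (hN : N ⊆ middle P) : ⊥ ∉ N :=
  fun h => (mem_middle.1 (hN h)).1 rfl

theorem card_eq_card_middle_inter [Nontrivial P] (Q : Finset P) :
    #Q = #(middle P ∩ Q) + ((if ⊥ ∈ Q then 1 else 0) + (if ⊤ ∈ Q then 1 else 0)) := by
  have hpair : #(Q ∩ {⊥, ⊤}) = (if ⊥ ∈ Q then 1 else 0) + (if ⊤ ∈ Q then 1 else 0) := by
    rw [inter_comm, ← filter_mem_eq_inter, card_filter, sum_pair bot_ne_top]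
  rw [← hpair, middle, inter_comm, ← sdiff_eq_inter_compl, card_sdiff_add_card_inter]

theorem traceAntichain_inter_middle (Q : Finset P) {N : Finset P} (hN : N ⊆ middle P) :
    traceAntichain Q N ∩ middle P = N := by
  ext p
  have := @hN p
  simp only [mem_inter, mem_traceAntichain, mem_middle] at this ⊢
  tauto

theorem traceAntichain_inj {Q N N' : Finset P} (hN : N ⊆ middle P) (hN' : N' ⊆ middle P) :
    traceAntichain Q N = traceAntichain Q N' ↔ N = N' := by
  refine ⟨fun h => ?_, congrArg _⟩
  rw [← traceAntichain_inter_middle Q hN, h, traceAntichain_inter_middle Q hN']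

theorem traceAntichain_univ_ne_empty (N : Finset P) : traceAntichain univ N ≠ ∅ := by
  simp [traceAntichain_eq_empty_iff]

theorem traceAntichain_ne_singleton_bot [Nontrivial P] (Q : Finset P) {N : Finset P}
    (hN : N ⊆ middle P) : traceAntichain Q N ≠ {⊥} := by
  intro h
  have hbot : ⊥ ∈ traceAntichain Q N := by simp [h]
  simp [mem_traceAntichain, bot_notMem_of_subset_middle hN] at hbot

theorem IsDiamond.isAntichain_traceAntichain (hP : IsDiamond P) (Q : Finset P) {N : Finset P}
    (hN : N ⊆ middle P) : IsAntichain (· ≤ ·) (traceAntichain Q N : Set P) := by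
  unfold traceAntichain
  split_ifs
  · simp
  · exact hP.subset (coe_subset.2 hN)

theorem IsDiamond.mem_antichainsIn_iff (hP : IsDiamond P) {Q T : Finset P} :
    T ∈ antichainsIn (Q : Set P) ↔ (T = ∅ ∧ ⊤ ∈ Q) ∨ (T = {⊥} ∧ ⊥ ∈ Q) ∨
      ∃ N ⊆ middle P ∩ Q, traceAntichain Q N = T := by
  rw [mem_antichainsIn]
  constructor
  · rintro ⟨hT, hTQ⟩
    by_cases hbot : ⊥ ∈ T
    · have hTbot : T = {⊥} := by simpa using hT.bot_mem_iff.1 hbot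
      exact .inr (.inl ⟨hTbot, hTQ hbot⟩)
    by_cases htop : ⊤ ∈ T
    · have hTtop : T = {⊤} := by simpa using hT.top_mem_iff.1 htop
      exact .inr (.inr ⟨∅, empty_subset _, by simp [traceAntichain, hTQ htop, hTtop]⟩)
    by_cases hempty : T = ∅ ∧ ⊤ ∈ Q
    · exact .inl hempty
    · refine .inr (.inr ⟨T, fun p hp => ?_, if_neg hempty⟩)
      rw [mem_inter, mem_middle]
      exact ⟨⟨ne_of_mem_of_not_mem hp hbot, ne_of_mem_of_not_mem hp htop⟩, hTQ hp⟩
  · rintro (⟨rfl, -⟩ | ⟨rfl, hbot⟩ | ⟨N, hN, rfl⟩)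
    · simp
    · simpa using hbot
    · obtain ⟨hNmid, hNQ⟩ := subset_inter_iff.1 hN
      refine ⟨hP.isAntichain_traceAntichain Q hNmid, fun p hp => ?_⟩
      rcases mem_traceAntichain.1 hp with hpN | ⟨rfl, -, htop⟩
      exacts [hNQ hpN, htop]

theorem IsDiamond.sum_antichainsIn [Nontrivial P] (hP : IsDiamond P) (Q : Finset P)
    (f : Finset P → ℝ) :
    ∑ T ∈ antichainsIn (Q : Set P), f T = (if ⊤ ∈ Q then f ∅ else 0) +
      ((if ⊥ ∈ Q then f {⊥} else 0) +
        ∑ N ∈ (middle P ∩ Q).powerset, f (traceAntichain Q N)) := by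
  have hmid : ∀ {N}, N ∈ (middle P ∩ Q).powerset → N ⊆ middle P := fun hN =>
    (mem_powerset.1 hN).trans inter_subset_left
  have hunion : antichainsIn (Q : Set P) = (if ⊤ ∈ Q then {∅} else ∅) ∪
      ((if ⊥ ∈ Q then {{⊥}} else ∅) ∪ (middle P ∩ Q).powerset.image (traceAntichain Q)) := by
    ext T
    rw [hP.mem_antichainsIn_iff]
    split_ifs with htop hbot hbot <;> simp [htop, hbot, -powerset_inter, or_left_comm]
  rw [hunion, sum_union, sum_union, sum_image]
  · congr 1
    · split_ifs <;> simp
    congr 1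
    split_ifs <;> simp
  · exact fun N hN N' hN' h => (traceAntichain_inj (hmid hN) (hmid hN')).1 h
  · split_ifs
    · simp only [disjoint_singleton_left, mem_image, not_exists, not_and]
      exact fun N hN => traceAntichain_ne_singleton_bot Q (hmid hN)
    · simp
  · split_ifs with htop hbot hbot <;> simp [traceAntichain_eq_empty_iff, htop, eq_comm]

theorem IsDiamond.sum_antichains [Nontrivial P] (hP : IsDiamond P) (f : Finset P → ℝ) :
    ∑ A ∈ antichains P, f A =
      f ∅ + (f {⊥} + ∑ N ∈ (middle P).powerset, f (traceAntichain univ N)) := by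
  rw [← antichainsIn_univ, hP.sum_antichainsIn]
  simp

theorem IsDiamond.upperClosure_traceAntichain_univ (hP : IsDiamond P) {N : Finset P}
    (hN : N ⊆ middle P) :
    (upperClosure (traceAntichain univ N : Set P) : Set P) = insert ⊤ (N : Set P) := by
  ext p
  simp only [SetLike.mem_coe, mem_upperClosure, mem_traceAntichain, mem_univ, and_true,
    Set.mem_insert_iff]
  constructor
  · rintro ⟨x, hx | ⟨rfl, -⟩, hxp⟩
    · by_cases hp : p = ⊤
      · exact .inl hp
      have hx' := mem_middle.1 (hN hx)
      have hpmid : p ∈ middle P := mem_middle.2 ⟨fun h => hx'.1 (le_bot_iff.1 (h ▸ hxp)), hp⟩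
      exact .inr (hP.eq (hN hx) hpmid hxp ▸ hx)
    · exact .inl (top_le_iff.1 hxp)
  · rintro (rfl | hp)
    · rcases N.eq_empty_or_nonempty with rfl | ⟨x, hx⟩
      · exact ⟨⊤, .inr ⟨rfl, rfl⟩, le_rfl⟩
      · exact ⟨x, .inl hx, le_top⟩
    · exact ⟨p, .inl hp, le_rfl⟩

theorem IsDiamond.setOf_minimal_inter_insert_top (hP : IsDiamond P) (Q : Finset P) {N : Finset P}
    (hN : N ⊆ middle P) :
    {y | Minimal (· ∈ (Q : Set P) ∩ insert ⊤ (N : Set P)) y} =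
      (traceAntichain Q (N ∩ Q) : Set P) := by
  ext p
  simp only [Set.mem_ofPred_eq, minimal_iff, Set.mem_inter_iff, Set.mem_insert_iff, mem_coe,
    mem_traceAntichain, mem_inter]
  constructor
  · rintro ⟨⟨hpQ, rfl | hpN⟩, hmin⟩
    · refine .inr ⟨rfl, eq_empty_of_forall_notMem fun x hx => ?_, hpQ⟩
      obtain ⟨hxN, hxQ⟩ := mem_inter.1 hx
      exact (mem_middle.1 (hN hxN)).2 (hmin ⟨hxQ, .inr hxN⟩ le_top).symm
    · exact .inl ⟨hpN, hpQ⟩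
  · rintro (⟨hpN, hpQ⟩ | ⟨rfl, hempty, htop⟩)
    · refine ⟨⟨hpQ, .inr hpN⟩, ?_⟩
      rintro y ⟨-, rfl | hyN⟩ hyp
      · exact top_le_iff.1 hyp
      · exact (hP.eq (hN hyN) (hN hpN) hyp).symm
    · refine ⟨⟨htop, .inl rfl⟩, ?_⟩
      rintro y ⟨hyQ, rfl | hyN⟩ -
      · rfl
      · exact absurd (mem_inter.2 ⟨hyN, hyQ⟩) (hempty ▸ notMem_empty y)

theorem IsDiamond.upperShadow_traceAntichain_univ (hP : IsDiamond P) (Q : Finset P) {N : Finset P}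
    (hN : N ⊆ middle P) :
    upperShadow (Q : Set P) (traceAntichain univ N) = traceAntichain Q (N ∩ Q) := by
  rw [upperShadow_eq_setOf_minimal, hP.upperClosure_traceAntichain_univ hN,
    hP.setOf_minimal_inter_insert_top Q hN]

theorem IsDiamond.upperShadow_singleton_bot (hP : IsDiamond P) (Q : Finset P) :
    upperShadow (Q : Set P) {⊥} =
      (if ⊥ ∈ Q then {⊥} else traceAntichain Q (middle P ∩ Q) : Finset P) := by
  rw [upperShadow_eq_setOf_minimal]
  split_ifs with hbot
  · ext p
    rw [Set.mem_ofPred_eq, minimal_iff_eq (y := ⊥) (by simpa) fun _ _ => bot_le]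
    simp
  · rw [← hP.setOf_minimal_inter_insert_top Q subset_rfl]
    suffices h : (Q : Set P) ∩ (upperClosure {(⊥ : P)} : Set P) =
      (Q : Set P) ∩ insert ⊤ (middle P : Set P) by rw [h]
    ext p
    have hp : p ∈ Q → p ≠ ⊥ := fun h => ne_of_mem_of_not_mem h hbot
    simp only [Set.mem_inter_iff, mem_coe, upperClosure_singleton, UpperSet.coe_Ici,
      Set.mem_Ici, bot_le, Set.mem_insert_iff, mem_middle]
    tauto

theorem IsDiamond.shadowWeight_eq [Nontrivial P] (hP : IsDiamond P) (α : Finset P → ℝ)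
    (Q T : Finset P) :
    shadowWeight α Q T = (if ∅ = T then α ∅ else 0) +
      ((if (if ⊥ ∈ Q then {⊥} else traceAntichain Q (middle P ∩ Q)) = T then α {⊥} else 0) +
        ∑ N ∈ (middle P).powerset,
          if traceAntichain Q (N ∩ Q) = T then α (traceAntichain univ N) else 0) := by
  rw [shadowWeight, sum_filter, hP.sum_antichains]
  congr 1
  · rw [coe_empty, upperShadow_empty, ← coe_empty]
    simp only [coe_inj]
  congr 1
  · rw [coe_singleton, hP.upperShadow_singleton_bot]
    simp only [coe_inj]
  · refine sum_congr rfl fun N hN => ?_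
    rw [hP.upperShadow_traceAntichain_univ Q (mem_powerset.1 hN)]
    simp only [coe_inj]

theorem IsDiamond.shadowWeight_empty [Nontrivial P] (hP : IsDiamond P) (α : Finset P → ℝ)
    {Q : Finset P} (htop : ⊤ ∈ Q) : shadowWeight α Q ∅ = α ∅ := by
  have hbot : (if ⊥ ∈ Q then {⊥} else traceAntichain Q (middle P ∩ Q)) ≠ ∅ := by
    split_ifs <;> simp [traceAntichain_eq_empty_iff, htop]
  simp [hP.shadowWeight_eq, hbot, traceAntichain_eq_empty_iff, htop]

theorem IsDiamond.shadowWeight_singleton_bot [Nontrivial P] (hP : IsDiamond P)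
    (α : Finset P → ℝ) {Q : Finset P} (hbot : ⊥ ∈ Q) : shadowWeight α Q {⊥} = α {⊥} := by
  have hmid : ∀ N ∈ (middle P).powerset, traceAntichain Q (N ∩ Q) ≠ {⊥} := fun N hN =>
    traceAntichain_ne_singleton_bot Q (inter_subset_left.trans (mem_powerset.1 hN))
  rw [hP.shadowWeight_eq, sum_congr rfl fun N hN => if_neg (hmid N hN)]
  simp [hbot]

theorem IsDiamond.shadowWeight_traceAntichain [Nontrivial P] (hP : IsDiamond P)
    (α : Finset P → ℝ) {Q N : Finset P} (hN : N ⊆ middle P ∩ Q) :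
    shadowWeight α Q (traceAntichain Q N) = (if N = ∅ ∧ ⊤ ∉ Q then α ∅ else 0) +
      ((if N = middle P ∩ Q ∧ ⊥ ∉ Q then α {⊥} else 0) +
        ∑ M ∈ (middle P).powerset with M ∩ Q = N, α (traceAntichain univ M)) := by
  have hNmid : N ⊆ middle P := hN.trans inter_subset_left
  have hbot : (if ⊥ ∈ Q then {⊥} else traceAntichain Q (middle P ∩ Q)) = traceAntichain Q N ↔
      N = middle P ∩ Q ∧ ⊥ ∉ Q := by
    split_ifs with h
    · simp [h, (traceAntichain_ne_singleton_bot Q hNmid).symm]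
    · rw [traceAntichain_inj inter_subset_left hNmid]
      simp [h, eq_comm]
  rw [hP.shadowWeight_eq, sum_filter]
  simp only [hbot, eq_comm (a := ∅), traceAntichain_eq_empty_iff]
  congr 2
  refine sum_congr rfl fun M hM => ?_
  simp only [traceAntichain_inj (inter_subset_left.trans (mem_powerset.1 hM)) hNmid]

theorem IsDiamond.shadowEntropy_eq [Nontrivial P] (hP : IsDiamond P) (α : Finset P → ℝ)
    (Q : Finset P) :
    shadowEntropy α Q = (if ⊤ ∈ Q then negMulLog (α ∅) else 0) +
      ((if ⊥ ∈ Q then negMulLog (α {⊥}) else 0) +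
        ∑ N ∈ (middle P ∩ Q).powerset, negMulLog (shadowWeight α Q (traceAntichain Q N))) := by
  rw [shadowEntropy, hP.sum_antichainsIn]
  split_ifs with htop hbot hbot <;>
    simp [hP.shadowWeight_empty, hP.shadowWeight_singleton_bot, htop, hbot]

theorem IsDiamond.sum_shadowWeight_traceAntichain [Nontrivial P] (hP : IsDiamond P)
    {α : Finset P → ℝ} (hα : IsWeighting α) {Q : Finset P} (hbot : ⊥ ∈ Q) (htop : ⊤ ∈ Q) :
    ∑ N ∈ (middle P ∩ Q).powerset, shadowWeight α Q (traceAntichain Q N) =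
      1 - α ∅ - α {⊥} := by
  have hfiber : ∑ N ∈ (middle P ∩ Q).powerset, shadowWeight α Q (traceAntichain Q N) =
      ∑ M ∈ (middle P).powerset, α (traceAntichain univ M) := by
    rw [← sum_fiberwise_of_maps_to (s := (middle P).powerset) (g := (· ∩ Q)) fun M hM =>
      mem_powerset.2 (inter_subset_inter_right (mem_powerset.1 hM))]
    refine sum_congr rfl fun N hN => ?_
    simp [hP.shadowWeight_traceAntichain α (mem_powerset.1 hN), hbot, htop]
  have htotal := hα.2.2
  rw [hP.sum_antichains] at htotal
  linarith

theorem IsDiamond.shadowEntropy_le [Nontrivial P] (hP : IsDiamond P) {α : Finset P → ℝ}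
    (hα : IsWeighting α) {Q : Finset P} (hbot : ⊥ ∈ Q) (htop : ⊤ ∈ Q) :
    shadowEntropy α Q ≤ negMulLog (α ∅) + negMulLog (α {⊥}) + negMulLog (1 - α ∅ - α {⊥}) +
      (1 - α ∅ - α {⊥}) * (#(middle P ∩ Q) * log 2) := by
  have h := sum_negMulLog_le_add_mul_log_card (s := (middle P ∩ Q).powerset)
    fun N _ => hα.shadowWeight_nonneg Q (traceAntichain Q N)
  rw [hP.sum_shadowWeight_traceAntichain hα hbot htop, card_powerset, Nat.cast_pow,
    Nat.cast_ofNat, log_pow] at h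
  rw [hP.shadowEntropy_eq, if_pos htop, if_pos hbot]
  linarith

theorem card_eq_card_middle_add_two [Nontrivial P] : Fintype.card P = #(middle P) + 2 := by
  simpa using card_eq_card_middle_inter (univ : Finset P)

theorem IsDiamond.le_of_forall_le_critExp [Nontrivial P] (hP : IsDiamond P)
    (hcard : 4 ≤ Fintype.card P) {x c : ℝ} (hx : 1 / 6 ≤ x) (hx' : x ≤ 1 / 3)
    (hbal : 2 * negMulLog x + negMulLog (1 - 2 * x) = 2 * ((1 - 2 * x) * log 2))
    {α : Finset P → ℝ} (hα : IsWeighting α)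
    (hc : ∀ Q : Set P, Q.Nonempty → c ≤ critExp α Q) : c ≤ (1 - 2 * x) * log 2 := by
  have hentropy : ∀ Q : Finset P, ⊥ ∈ Q → ⊤ ∈ Q → (#(middle P ∩ Q) + 2) * c ≤
      negMulLog (α ∅) + negMulLog (α {⊥}) + negMulLog (1 - α ∅ - α {⊥}) +
        (1 - α ∅ - α {⊥}) * (#(middle P ∩ Q) * log 2) := by
    intro Q hbot htop
    have hQ : Q.Nonempty := ⟨⊥, hbot⟩
    have h := (le_critExp_iff hQ).1 (hc Q hQ)
    have hcardQ : #Q = #(middle P ∩ Q) + 2 := by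
      rw [card_eq_card_middle_inter, if_pos hbot, if_pos htop]
    rw [hcardQ, Nat.cast_add, Nat.cast_ofNat] at h
    exact h.trans (hP.shadowEntropy_le hα hbot htop)
  have hpair := hentropy {⊥, ⊤} (by simp) (by simp)
  have hall := hentropy univ (mem_univ _) (mem_univ _)
  rw [show middle P ∩ {⊥, ⊤} = ∅ by simp [middle]] at hpair
  rw [inter_univ] at hall
  have hrest : 0 ≤ 1 - α ∅ - α {⊥} := by
    rw [← hP.sum_shadowWeight_traceAntichain hα (mem_univ _) (mem_univ _)]
    exact sum_nonneg fun N _ => hα.shadowWeight_nonneg _ _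
  have ht : (2 : ℝ) ≤ #(middle P) := by
    have := card_eq_card_middle_add_two (P := P)
    exact_mod_cast (by omega : 2 ≤ #(middle P))
  exact le_of_entropy_bounds ht hx hx' hbal (hα.1 _ (mem_antichains.2 (by simp)))
    (hα.1 _ (mem_antichains.2 (by simp))) (by linarith) (by simpa using hpair) hall

/-- The weighting of a diamond with weight `x` on each of `∅` and `{⊥}` and the rest spread evenly
over the other antichains, one for each set of middle elements; it is optimal for `x = x⋆`. -/
noncomputable def diamondWeighting (P : Type*) [Fintype P] [PartialOrder P] [BoundedOrder P]
    [DecidableEq P] (x : ℝ) (A : Finset P) : ℝ :=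
  if A ∈ antichains P then
    if A = ∅ ∨ A = {⊥} then x else (1 - 2 * x) / 2 ^ #(middle P)
  else 0

theorem diamondWeighting_empty (x : ℝ) : diamondWeighting P x ∅ = x := by
  simp [diamondWeighting, mem_antichains]

theorem diamondWeighting_singleton_bot (x : ℝ) : diamondWeighting P x {⊥} = x := by
  simp [diamondWeighting, mem_antichains]

theorem IsDiamond.diamondWeighting_traceAntichain [Nontrivial P] (hP : IsDiamond P) (x : ℝ)
    {N : Finset P} (hN : N ⊆ middle P) :
    diamondWeighting P x (traceAntichain univ N) = (1 - 2 * x) / 2 ^ #(middle P) := by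
  rw [diamondWeighting, if_pos (mem_antichains.2 (hP.isAntichain_traceAntichain univ hN)),
    if_neg (not_or.2 ⟨traceAntichain_univ_ne_empty N, traceAntichain_ne_singleton_bot _ hN⟩)]

theorem IsDiamond.isWeighting_diamondWeighting [Nontrivial P] (hP : IsDiamond P) {x : ℝ}
    (hx : 0 ≤ x) (hx' : x ≤ 1 / 2) : IsWeighting (diamondWeighting P x) := by
  refine ⟨fun A _ => ?_, fun A hA => if_neg hA, ?_⟩
  · have h : 0 ≤ (1 - 2 * x) / 2 ^ #(middle P) := div_nonneg (by linarith) (by positivity)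
    unfold diamondWeighting
    split_ifs <;> assumption
  · rw [hP.sum_antichains, diamondWeighting_empty, diamondWeighting_singleton_bot,
      sum_congr rfl fun N hN => hP.diamondWeighting_traceAntichain x (mem_powerset.1 hN),
      sum_const, card_powerset, nsmul_eq_mul]
    push_cast
    field_simp
    ring

theorem card_powerset_filter_inter_eq {ι : Type*} [DecidableEq ι] {M Q N : Finset ι}
    (hN : N ⊆ M ∩ Q) : #{A ∈ M.powerset | A ∩ Q = N} = 2 ^ #(M \ Q) := by
  have hIcc : {A ∈ M.powerset | A ∩ Q = N} = Icc N (N ∪ M \ Q) := by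
    ext A
    simp only [mem_filter, mem_powerset, mem_Icc, Finset.ext_iff, subset_iff, mem_inter,
      mem_union, mem_sdiff] at hN ⊢
    grind
  have hdisj : Disjoint N (M \ Q) :=
    (disjoint_sdiff (s := Q)).mono_left (hN.trans inter_subset_right)
  rw [hIcc, card_Icc_finset subset_union_left, card_union_of_disjoint hdisj,
    Nat.add_sub_cancel_left]

theorem IsDiamond.shadowWeight_diamondWeighting [Nontrivial P] (hP : IsDiamond P) (x : ℝ)
    {Q N : Finset P} (hN : N ⊆ middle P ∩ Q) :
    shadowWeight (diamondWeighting P x) Q (traceAntichain Q N) =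
      (if N = ∅ ∧ ⊤ ∉ Q then x else 0) + ((if N = middle P ∩ Q ∧ ⊥ ∉ Q then x else 0) +
        (1 - 2 * x) / 2 ^ #(middle P ∩ Q)) := by
  have hfiber : ∑ M ∈ (middle P).powerset with M ∩ Q = N,
      diamondWeighting P x (traceAntichain univ M) = (1 - 2 * x) / 2 ^ #(middle P ∩ Q) := by
    rw [sum_congr rfl fun M hM =>
        hP.diamondWeighting_traceAntichain x (mem_powerset.1 (mem_filter.1 hM).1),
      sum_const, card_powerset_filter_inter_eq hN, nsmul_eq_mul,
      ← card_sdiff_add_card_inter (middle P) Q, pow_add]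
    push_cast
    field_simp
  rw [hP.shadowWeight_traceAntichain _ hN, diamondWeighting_empty,
    diamondWeighting_singleton_bot, hfiber]

theorem IsDiamond.negMulLog_shadowWeight_diamondWeighting_ge [Nontrivial P] (hP : IsDiamond P)
    {x c : ℝ} (hx : 0 ≤ x) (hx' : x ≤ 1 / 2)
    (hbal : 2 * negMulLog x + negMulLog (1 - 2 * x) = 2 * c)
    {Q N : Finset P} (hQ : Q.Nonempty) (hN : N ⊆ middle P ∩ Q) :
    (if N = ∅ ∧ ⊤ ∉ Q then negMulLog x - c else 0) +
      ((if N = middle P ∩ Q ∧ ⊥ ∉ Q then negMulLog x - c else 0) +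
        negMulLog ((1 - 2 * x) / 2 ^ #(middle P ∩ Q))) ≤
      negMulLog (shadowWeight (diamondWeighting P x) Q (traceAntichain Q N)) := by
  have hmerge := negMulLog_add_sub_le (w := (1 - 2 * x) / 2 ^ #(middle P ∩ Q)) hx hbal
    (div_nonneg (by linarith) (by positivity))
    (div_le_self (by linarith) (one_le_pow₀ one_le_two))
  have hexcl : ¬((N = ∅ ∧ ⊤ ∉ Q) ∧ N = middle P ∩ Q ∧ ⊥ ∉ Q) := by
    rintro ⟨⟨rfl, htop⟩, hempty, hbot⟩
    have hcardQ := card_eq_card_middle_inter Q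
    rw [← hempty, if_neg htop, if_neg hbot] at hcardQ
    exact hQ.card_pos.ne' (by simpa using hcardQ)
  rw [hP.shadowWeight_diamondWeighting x hN]
  split_ifs with h₁ h₂ h₂
  · exact absurd ⟨h₁, h₂⟩ hexcl
  · rwa [zero_add, zero_add, add_comm x, add_comm]
  · rwa [zero_add, zero_add, add_comm x, add_comm]
  · simp only [zero_add, le_refl]

theorem two_pow_mul_negMulLog_div_two_pow (y : ℝ) (k : ℕ) :
    2 ^ k * negMulLog (y / 2 ^ k) = negMulLog y + k * (y * log 2) := by
  rw [div_eq_mul_inv, negMulLog_mul, negMulLog, negMulLog, log_inv, log_pow]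
  field_simp

theorem IsDiamond.le_critExp_diamondWeighting [Nontrivial P] (hP : IsDiamond P) {x : ℝ}
    (hx : 0 ≤ x) (hx' : x ≤ 1 / 2)
    (hbal : 2 * negMulLog x + negMulLog (1 - 2 * x) = 2 * ((1 - 2 * x) * log 2))
    {Q : Set P} (hQ : Q.Nonempty) : (1 - 2 * x) * log 2 ≤ critExp (diamondWeighting P x) Q := by
  lift Q to Finset P using Q.toFinite
  rw [coe_nonempty] at hQ
  rw [le_critExp_iff hQ, hP.shadowEntropy_eq, diamondWeighting_empty,
    diamondWeighting_singleton_bot]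
  have hsum := sum_le_sum fun N hN =>
    hP.negMulLog_shadowWeight_diamondWeighting_ge hx hx' hbal hQ (mem_powerset.1 hN)
  simp only [sum_add_distrib, sum_const, card_powerset, nsmul_eq_mul, Nat.cast_pow,
    Nat.cast_ofNat, two_pow_mul_negMulLog_div_two_pow, ite_and, sum_ite_eq', mem_powerset,
    empty_subset, subset_rfl, if_true, ite_not] at hsum
  rw [card_eq_card_middle_inter Q]
  push_cast
  split_ifs at hsum ⊢ <;> linarith

theorem IsDiamond.critStar_eq [Nontrivial P] (hP : IsDiamond P)
    (hcard : 4 ≤ Fintype.card P) {x : ℝ} (hx : x ∈ Set.Icc (1 / 6) (1 / 3))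
    (hroot : 2 * (1 - 3 * x) * log 2 - H₂ (2 * x) = 0) :
    critStar P = (1 - 2 * x) * log 2 := by
  obtain ⟨hx₁, hx₂⟩ := hx
  have hbal := two_mul_negMulLog_add_eq_of_sub_H₂_eq_zero (by linarith) hroot
  refine IsGreatest.csSup_eq ⟨⟨?_, diamondWeighting P x, ?_, fun Q hQ => ?_⟩, ?_⟩
  · exact mul_nonneg (by linarith) (log_nonneg one_le_two)
  · exact hP.isWeighting_diamondWeighting (by linarith) (by linarith)
  · exact hP.le_critExp_diamondWeighting (by linarith) (by linarith) hbal hQ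
  · rintro c ⟨-, α, hα, hc⟩
    exact hP.le_of_forall_le_critExp hcard hx₁ hx₂ hbal hα hc

end Diamond

namespace Layered

theorem fst_lt_fst {ℓ : ℕ} {s : Fin ℓ → ℕ} {p q : Layered ℓ s} (h : p < q) : p.1 < q.1 :=
  h.le.resolve_right h.ne

instance instBoundedOrderOneOne (t : ℕ) : BoundedOrder (Layered 3 ![1, t, 1]) where
  bot := ⟨0, (0 : Fin 1)⟩
  bot_le p := by
    obtain ⟨i, j⟩ := p
    by_cases hi : i = 0
    · subst hi
      exact .inr (congrArg (Sigma.mk 0) (Subsingleton.elim (α := Fin 1) _ _))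
    · exact .inl (Fin.pos_of_ne_zero hi)
  top := ⟨2, (0 : Fin 1)⟩
  le_top p := by
    obtain ⟨i, j⟩ := p
    by_cases hi : i = 2
    · subst hi
      exact .inr (congrArg (Sigma.mk 2) (Subsingleton.elim (α := Fin 1) _ _))
    · exact .inl (by change i < 2; omega)

instance (t : ℕ) : Nontrivial (Layered 3 ![1, t, 1]) :=
  ⟨⊥, ⊤, fun h => (by decide : (0 : Fin 3) ≠ 2) (congrArg Sigma.fst h)⟩

theorem card_one_one (t : ℕ) : Fintype.card (Layered 3 ![1, t, 1]) = t + 2 := by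
  change Fintype.card ((i : Fin 3) × Fin (![1, t, 1] i)) = t + 2
  rw [Fintype.card_sigma, Fin.sum_univ_three]
  simp only [Fintype.card_fin]
  change 1 + t + 1 = t + 2
  omega

theorem isDiamond_one_one (t : ℕ) [DecidableEq (Layered 3 ![1, t, 1])] :
    IsDiamond (Layered 3 ![1, t, 1]) := by
  intro p hp q hq hne hle
  have hbot : (0 : Fin 3) < p.1 := fst_lt_fst (bot_lt_iff_ne_bot.2 (mem_middle.1 hp).1)
  have hmid : p.1 < q.1 := fst_lt_fst (lt_of_le_of_ne hle hne)
  have htop : q.1 < (2 : Fin 3) := fst_lt_fst (lt_top_iff_ne_top.2 (mem_middle.1 hq).2)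
  omega

end Layered

/-- There is a unique `x⋆ ∈ [1/6, 1/4]` with `2(1 - 3x⋆) log 2 - H₂(2x⋆) = 0`, and for
every `t ≥ 2` the `t`-wide diamond `C(1,t,1)` satisfies
`c_⋆(C(1,t,1)) = (1 - 2x⋆) log 2`. -/
theorem stmt15 :
    ∃ xs : ℝ, xs ∈ Set.Icc (1 / 6 : ℝ) (1 / 4) ∧
      2 * (1 - 3 * xs) * Real.log 2 - H₂ (2 * xs) = 0 ∧
      (∀ y ∈ Set.Icc (1 / 6 : ℝ) (1 / 4),
        2 * (1 - 3 * y) * Real.log 2 - H₂ (2 * y) = 0 → y = xs) ∧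
      ∀ t : ℕ, 2 ≤ t → critStar (Layered 3 ![1, t, 1]) = (1 - 2 * xs) * Real.log 2 := by
  classical
  obtain ⟨x, hx, hroot⟩ := exists_sub_H₂_two_mul_eq_zero
  have hsub : Set.Icc (1 / 6 : ℝ) (1 / 4) ⊆ Set.Icc 0 (1 / 4) :=
    Set.Icc_subset_Icc_left (by norm_num)
  refine ⟨x, hx, hroot, fun y hy hy0 => ?_, fun t ht => ?_⟩
  · exact strictAntiOn_sub_H₂_two_mul.injOn (hsub hy) (hsub hx) (hy0.trans hroot.symm)
  · refine (Layered.isDiamond_one_one t).critStar_eq ?_ ⟨hx.1, by linarith [hx.2]⟩ hroot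
    rw [Layered.card_one_one]
    omega
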